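/- Let n ≥ 1 and 1 ≤ q ≤ n. Let v assign to each pair (k, M), where k ∈ {1,…,n} and M is a q-tuple of indices in {1,…,n}, a complex number v_{k,M}, antisymmetric under permutations of M (hence vanishing when M has a repeated index). Then Σ'_{|M|=q} Σ'_{|N|=q} Σ_{k,l=1}^n σ^{kM}_{lN} v_{k,M} · conj(v_{l,N}) = Σ'_{|M|=q} Σ_{k=1}^n |v_{k,M}|² − Σ'_{|J|=q−1} Σ_{k,l=1}^n v_{k,lJ} · conj(v_{l,kJ}), where kM denotes the (q+1)-tuple (k,M) and v_{k,lJ} denotes the value of v at (k, (l,J)). -/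

import Mathlib

open scoped BigOperators
open MeasureTheory

namespace HM

/-- The finset of strictly increasing multi-indices of length `q` with entries in `Fin n`. -/
def Incr (n q : ℕ) : Finset (Fin q → Fin n) :=
  Finset.univ.filter (fun I => ∀ a b : Fin q, a < b → I a < I b)

/-- Prepend the index `k` to a `(q-1)`-tuple `J`, giving the `q`-tuple `kJ`. -/
def cons' {n : ℕ} (q : ℕ) (k : Fin n) (J : Fin (q - 1) → Fin n) : Fin q → Fin n :=
  fun i => if h : (i : ℕ) = 0 then k else J ⟨(i : ℕ) - 1, by have := i.isLt; omega⟩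

/-- A (0,q)-coefficient system: an antisymmetric assignment of complex numbers to q-tuples
(hence vanishing on tuples with a repeated index). -/
def IsCoeff {n q : ℕ} (u : (Fin q → Fin n) → ℂ) : Prop :=
  ∀ (σ : Equiv.Perm (Fin q)) (I : Fin q → Fin n),
    u (I ∘ σ) = ((Equiv.Perm.sign σ : ℤ) : ℂ) * u I

/-- `|u|²`, the sum of `|u_I|²` over strictly increasing multi-indices `I`. -/
noncomputable def nSq {n q : ℕ} (u : (Fin q → Fin n) → ℂ) : ℝ :=
  ∑ I ∈ Incr n q, ‖u I‖ ^ 2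

/-- The Hessian form of a matrix `H` on coefficient systems:
`H(u,v) = Σ'_{|J|=q-1} Σ_{k,l} H_{lk} u_{lJ} conj(v_{kJ})`. -/
noncomputable def mForm {n : ℕ} (q : ℕ) (H : Matrix (Fin n) (Fin n) ℂ)
    (u v : (Fin q → Fin n) → ℂ) : ℂ :=
  ∑ J ∈ Incr n (q - 1), ∑ k : Fin n, ∑ l : Fin n,
    H l k * u (cons' q l J) * star (v (cons' q k J))

/-- `σ^I_J`: the sign of the permutation rearranging `I` into `J`; `0` if `J` is not a
rearrangement of `I` (in particular `0` if `I` has a repeated entry). -/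
def permSign {n p : ℕ} (I J : Fin p → Fin n) : ℤ :=
  if Function.Injective I then
    ∑ π : Equiv.Perm (Fin p), if J = I ∘ π then ((Equiv.Perm.sign π : ℤ)) else 0
  else 0

/-- The Wirtinger derivative `∂f/∂z_k` of a complex-valued function, via real Fréchet
derivatives: `½(∂f/∂x_k − i ∂f/∂y_k)`. -/
noncomputable def dz {n : ℕ} (f : (Fin n → ℂ) → ℂ) (k : Fin n) (z : Fin n → ℂ) : ℂ :=
  (1/2 : ℂ) * (fderiv ℝ f z (Pi.single k 1) - Complex.I * fderiv ℝ f z (Pi.single k Complex.I))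

/-- The Wirtinger derivative `∂f/∂z̄_k`: `½(∂f/∂x_k + i ∂f/∂y_k)`. -/
noncomputable def dzbar {n : ℕ} (f : (Fin n → ℂ) → ℂ) (k : Fin n) (z : Fin n → ℂ) : ℂ :=
  (1/2 : ℂ) * (fderiv ℝ f z (Pi.single k 1) + Complex.I * fderiv ℝ f z (Pi.single k Complex.I))

/-- The mixed Wirtinger Hessian `∂²f/∂z_l∂z̄_k` of a real-valued function. -/
noncomputable def hessW {n : ℕ} (f : (Fin n → ℂ) → ℝ) (l k : Fin n) (z : Fin n → ℂ) : ℂ :=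
  dz (fun w => dzbar (fun y => (f y : ℂ)) k w) l z

/-- The Hessian form `i∂∂̄f(u,u)(z) = Σ'_{|J|=q-1} Σ_{k,l} ∂²f/∂z_l∂z̄_k(z) u_{lJ} conj(u_{kJ})`. -/
noncomputable def hForm {n : ℕ} (q : ℕ) (f : (Fin n → ℂ) → ℝ)
    (u : (Fin q → Fin n) → ℂ) (z : Fin n → ℂ) : ℂ :=
  ∑ J ∈ Incr n (q - 1), ∑ k : Fin n, ∑ l : Fin n,
    hessW f l k z * u (cons' q l J) * star (u (cons' q k J))

/-- Coefficient of `∂̄u` on the `(q+1)`-tuple `M`: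
`(∂̄u)_M = Σ_k Σ'_{|J|=q} σ^{kJ}_M ∂u_J/∂z̄_k`. -/
noncomputable def dbarC {n : ℕ} (q : ℕ) (u : (Fin q → Fin n) → (Fin n → ℂ) → ℂ)
    (M : Fin (q + 1) → Fin n) (z : Fin n → ℂ) : ℂ :=
  ∑ k : Fin n, ∑ J ∈ Incr n q, ((permSign (cons' (q + 1) k J) M : ℤ) : ℂ) * dzbar (u J) k z

/-- Coefficient of `ϑu` on the `(q-1)`-tuple `J`: `(ϑu)_J = −Σ_l ∂u_{lJ}/∂z_l`. -/
noncomputable def thetaC {n : ℕ} (q : ℕ) (u : (Fin q → Fin n) → (Fin n → ℂ) → ℂ)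
    (J : Fin (q - 1) → Fin n) (z : Fin n → ℂ) : ℂ :=
  -∑ l : Fin n, dz (u (cons' q l J)) l z

/-- Pointwise `|∂̄u|²`. -/
noncomputable def dbarSq {n : ℕ} (q : ℕ) (u : (Fin q → Fin n) → (Fin n → ℂ) → ℂ)
    (z : Fin n → ℂ) : ℝ :=
  ∑ M ∈ Incr n (q + 1), ‖dbarC q u M z‖ ^ 2

/-- Pointwise `|ϑu|²`. -/
noncomputable def thetaSq {n : ℕ} (q : ℕ) (u : (Fin q → Fin n) → (Fin n → ℂ) → ℂ)
    (z : Fin n → ℂ) : ℝ :=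
  ∑ J ∈ Incr n (q - 1), ‖thetaC q u J z‖ ^ 2

/-- Remove the `i`-th entry of a `j`-tuple, giving a `(j-1)`-tuple. -/
def removeIdx {n j : ℕ} (I : Fin j → Fin n) (i : Fin j) : Fin (j - 1) → Fin n :=
  fun t => if (t : ℕ) < (i : ℕ) then I ⟨t, by have := t.isLt; omega⟩
    else I ⟨(t : ℕ) + 1, by have := t.isLt; omega⟩

/-- The increasing `j`-tuple listing a finset `S` (with default `d` out of range). -/
def sortedTuple {n : ℕ} (j : ℕ) (S : Finset (Fin n)) (d : Fin n) : Fin j → Fin n :=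
  fun t => (S.sort (· ≤ ·)).getD t d

end HM

/-!
Write `e_l ∧ ·` and `ι_k` for exterior multiplication and contraction on alternating families.
Since `σ^{kM}_{lN}` is the matrix coefficient of `ι_k (e_l ∧ ·)` between `M` and `N`, the identity
is the anticommutation relation `ι_k (e_l ∧ ·) + e_l ∧ ι_k = δ_{kl}` paired with `v_k` and
`conj v_l`. In coordinates: `σ` is a minor of the identity matrix, and Laplace expansion along its
first column gives `Σ_l Σ'_N σ^I_{lN} w_{l,N} = Σ_j (-1)^j w_{I_j, I∖I_j}`. For `I = kM` the term
`j = 0` produces the diagonal sum; in the other terms, the sign `(-1)^{j-1}` that moves the entry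
`M_{j-1}` back to the front of `M` is absorbed by `v_{k,M}`, and splitting an entry off an
increasing `M` amounts to choosing an increasing `J` and an entry `l ∉ J`.
-/

namespace HM

open Equiv Function

variable {n q : ℕ}

lemma cons'_succ (k : Fin n) (J : Fin q → Fin n) : cons' (q + 1) k J = Fin.cons k J := by
  funext i
  cases i using Fin.cases <;> simp [cons']

lemma mem_Incr {I : Fin q → Fin n} : I ∈ Incr n q ↔ StrictMono I := by
  simp [Incr, StrictMono]

lemma strictMono_comp_perm_iff {α : Type*} [LinearOrder α] {M : Fin q → α} (hM : Injective M)
    (π : Perm (Fin q)) : StrictMono (M ∘ π) ↔ π = Tuple.sort M := by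
  constructor
  · intro h
    exact Tuple.eq_sort_iff.mpr
      ⟨h.monotone, fun i j hij heq => absurd (h.injective heq) hij.ne⟩
  · rintro rfl
    exact (Tuple.monotone_sort M).strictMono_of_injective (hM.comp (Tuple.sort M).injective)

lemma range_removeNth_of_injective {α : Type*} {M : Fin (q + 1) → α} (hM : Injective M)
    (j : Fin (q + 1)) : Set.range (j.removeNth M) = Set.range M \ {M j} := by
  change Set.range (M ∘ j.succAbove) = _
  rw [Set.range_comp, Fin.range_succAbove, Set.compl_eq_univ_sdiff, Set.image_sdiff hM,
    Set.image_univ, Set.image_singleton]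

lemma removeNth_succ_cons {α : Type*} (k : α) (M : Fin (q + 1) → α) (j : Fin (q + 1)) :
    j.succ.removeNth (Fin.cons k M : Fin (q + 2) → α) = Fin.cons k (j.removeNth M) := by
  funext i
  cases i using Fin.cases <;> simp [Fin.removeNth]

lemma strictMono_removeNth {α : Type*} [Preorder α] {M : Fin (q + 1) → α} (hM : StrictMono M)
    (j : Fin (q + 1)) : StrictMono (j.removeNth M) :=
  hM.comp (Fin.strictMono_succAbove j)

lemma exists_strictMono_removeNth_eq {α : Type*} [LinearOrder α] {J : Fin q → α} {l : α}
    (hJ : StrictMono J) (hl : l ∉ Set.range J) :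
    ∃ (M : Fin (q + 1) → α) (j : Fin (q + 1)),
      StrictMono M ∧ M j = l ∧ j.removeNth M = J := by
  let L : Fin (q + 1) → α := Fin.cons l J
  have hL : Injective L := Fin.cons_injective_iff.mpr ⟨hl, hJ.injective⟩
  let π := Tuple.sort L
  have hmono : StrictMono (L ∘ π) := (strictMono_comp_perm_iff hL π).mpr rfl
  have hentry : (L ∘ π) (π.symm 0) = l := by simp [L]
  refine ⟨L ∘ π, π.symm 0, hmono, hentry, ?_⟩
  rw [← (strictMono_removeNth hmono _).range_inj hJ, range_removeNth_of_injective hmono.injective,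
    hentry, π.surjective.range_comp, Fin.range_cons, Set.insert_sdiff_self_of_notMem hl]

lemma removeNth_inj_of_strictMono {α : Type*} [Preorder α] {M M' : Fin (q + 1) → α}
    {j j' : Fin (q + 1)} (hM : StrictMono M) (hM' : StrictMono M')
    (hentry : M j = M' j') (hrest : j.removeNth M = j'.removeNth M') : M = M' ∧ j = j' := by
  have hrange : Set.range M = Set.range M' := by
    rw [← Fin.insertNth_self_removeNth j M, ← Fin.insertNth_self_removeNth j' M',
      Fin.range_insertNth, Fin.range_insertNth, hentry, hrest]
  obtain rfl := (hM.range_inj hM').mp hrange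
  exact ⟨rfl, hM.injective hentry⟩

lemma sum_Incr_succ_sum_removeNth {A : Type*} [AddCommMonoid A] (f : Fin n → (Fin q → Fin n) → A)
    (hf : ∀ l J, l ∈ Set.range J → f l J = 0) :
    ∑ M ∈ Incr n (q + 1), ∑ j, f (M j) (j.removeNth M) = ∑ J ∈ Incr n q, ∑ l, f l J := by
  rw [← Finset.sum_product', ← Finset.sum_product']
  refine Finset.sum_bij_ne_zero (fun x _ _ => (x.2.removeNth x.1, x.1 x.2)) ?_ ?_ ?_ ?_
  · rintro ⟨M, j⟩ hM -
    simp only [Finset.mem_product, mem_Incr, Finset.mem_univ, and_true] at hM ⊢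
    exact strictMono_removeNth hM j
  · rintro ⟨M, j⟩ hM - ⟨M', j'⟩ hM' - h
    simp only [Finset.mem_product, mem_Incr, Finset.mem_univ, and_true] at hM hM'
    obtain ⟨hrest, hentry⟩ := Prod.mk.inj h
    exact Prod.ext_iff.mpr (removeNth_inj_of_strictMono hM hM' hentry hrest)
  · rintro ⟨J, l⟩ hJ hne
    simp only [Finset.mem_product, mem_Incr, Finset.mem_univ, and_true] at hJ
    obtain ⟨M, j, hM, rfl, rfl⟩ := exists_strictMono_removeNth_eq hJ fun hl => hne (hf l J hl)
    exact ⟨(M, j), by simpa [mem_Incr] using hM, hne, rfl⟩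
  · intros
    rfl

lemma permSign_eq_det (I J : Fin q → Fin n) :
    permSign I J = ((1 : Matrix (Fin n) (Fin n) ℤ).submatrix I J).det := by
  by_cases hI : Injective I
  · rw [permSign, if_pos hI, Matrix.det_apply]
    refine Finset.sum_congr rfl fun π _ => ?_
    simp only [Matrix.submatrix_apply, Matrix.one_apply, Fintype.prod_boole, funext_iff, comp_apply,
      Units.smul_def, smul_eq_mul, mul_ite, mul_one, mul_zero, eq_comm]
  · obtain ⟨a, b, hab, hne⟩ := not_injective_iff.mp hI
    rw [permSign, if_neg hI, Matrix.det_zero_of_row_eq hne]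
    funext c
    simp only [Matrix.submatrix_apply, Matrix.one_apply, hab]

lemma permSign_cons (I : Fin (q + 1) → Fin n) (l : Fin n) (N : Fin q → Fin n) :
    permSign I (Fin.cons l N) =
      ∑ j, if I j = l then (-1) ^ (j : ℕ) * permSign (j.removeNth I) N else 0 := by
  rw [permSign_eq_det, Matrix.det_succ_column_zero]
  refine Finset.sum_congr rfl fun j _ => ?_
  rw [permSign_eq_det, Matrix.submatrix_submatrix, Matrix.submatrix_apply, Matrix.one_apply,
    Fin.cons_zero, mul_ite, mul_one, mul_zero, ite_mul, zero_mul]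
  rfl

variable {R : Type*} [CommRing R]

/-- Alternating families of scalars indexed by `q`-tuples, over an arbitrary commutative ring.
Vanishing on tuples with a repeated entry is required separately, because antisymmetry does not
imply it when `2` is a zero divisor. -/
structure IsAlternating (u : (Fin q → Fin n) → R) : Prop where
  apply_comp_perm (σ : Perm (Fin q)) (I : Fin q → Fin n) : u (I ∘ σ) = ((Perm.sign σ : ℤ) : R) * u I
  apply_eq_zero_of_not_injective {I : Fin q → Fin n} (hI : ¬ Injective I) : u I = 0

lemma IsCoeff.isAlternating {u : (Fin q → Fin n) → ℂ} (hu : IsCoeff u) : IsAlternating u where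
  apply_comp_perm := hu
  apply_eq_zero_of_not_injective {I} hI := by
    obtain ⟨a, b, hab, hne⟩ := not_injective_iff.mp hI
    have hanti := hu (swap a b) I
    rw [comp_swap_eq_update, hab, update_eq_self, ← hab, update_eq_self,
      Perm.sign_swap hne] at hanti
    exact self_eq_neg.mp (by simpa using hanti)

namespace IsAlternating

protected lemma star [StarRing R] {u : (Fin q → Fin n) → R} (hu : IsAlternating u) :
    IsAlternating (star u) where
  apply_comp_perm σ I := by simp [hu.apply_comp_perm, mul_comm]
  apply_eq_zero_of_not_injective hI := by simp [hu.apply_eq_zero_of_not_injective hI]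

lemma apply_cons_eq_zero {u : (Fin (q + 1) → Fin n) → R} (hu : IsAlternating u) {l : Fin n}
    {J : Fin q → Fin n} (hl : l ∈ Set.range J) : u (Fin.cons l J) = 0 :=
  hu.apply_eq_zero_of_not_injective fun h => (Fin.cons_injective_iff.mp h).1 hl

lemma apply_cons_removeNth {u : (Fin (q + 1) → Fin n) → R} (hu : IsAlternating u)
    (M : Fin (q + 1) → Fin n) (j : Fin (q + 1)) :
    u (Fin.cons (M j) (j.removeNth M)) = (-1) ^ (j : ℕ) * u M := by
  rw [Fin.cons_removeNth_eq_comp_cycleRange_symm, hu.apply_comp_perm, Perm.sign_symm,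
    Fin.sign_cycleRange]
  simp

lemma sum_permSign_mul {u : (Fin q → Fin n) → R} (hu : IsAlternating u) (M : Fin q → Fin n) :
    ∑ N ∈ Incr n q, (permSign M N : R) * u N = u M := by
  by_cases hM : Injective M
  · calc ∑ N ∈ Incr n q, (permSign M N : R) * u N
      _ = ∑ π : Perm (Fin q), ∑ N ∈ Incr n q,
            if N = M ∘ π then ((Perm.sign π : ℤ) : R) * u N else 0 := by
        rw [Finset.sum_comm]
        simp [permSign, hM, Finset.sum_mul]
      _ = ∑ π : Perm (Fin q), if π = Tuple.sort M then
            ((Perm.sign π : ℤ) : R) * (((Perm.sign π : ℤ) : R) * u M) else 0 := by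
        simp [mem_Incr, strictMono_comp_perm_iff hM, hu.apply_comp_perm]
      _ = u M := by
        rw [Finset.sum_ite_eq', if_pos (Finset.mem_univ _), ← mul_assoc]
        norm_cast
        simp
  · simp [permSign, hM, hu.apply_eq_zero_of_not_injective hM]

end IsAlternating

lemma sum_permSign_cons_mul {w : Fin n → (Fin q → Fin n) → R} (hw : ∀ l, IsAlternating (w l))
    (I : Fin (q + 1) → Fin n) :
    ∑ N ∈ Incr n q, ∑ l, (permSign I (Fin.cons l N) : R) * w l N =
      ∑ j : Fin (q + 1), (-1) ^ (j : ℕ) * w (I j) (j.removeNth I) := by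
  calc ∑ N ∈ Incr n q, ∑ l, (permSign I (Fin.cons l N) : R) * w l N
    _ = ∑ N ∈ Incr n q, ∑ j : Fin (q + 1),
          (-1) ^ (j : ℕ) * ((permSign (j.removeNth I) N : R) * w (I j) N) := by
      refine Finset.sum_congr rfl fun N _ => ?_
      simp only [permSign_cons, Int.cast_sum, Finset.sum_mul]
      rw [Finset.sum_comm]
      simp [mul_assoc]
    _ = ∑ j : Fin (q + 1), (-1) ^ (j : ℕ) * w (I j) (j.removeNth I) := by
      rw [Finset.sum_comm]
      simp only [← Finset.mul_sum, (hw _).sum_permSign_mul]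

lemma sum_permSign_cons_cons_mul {w : Fin n → (Fin (q + 1) → Fin n) → R}
    (hw : ∀ l, IsAlternating (w l)) (k : Fin n) (M : Fin (q + 1) → Fin n) :
    ∑ N ∈ Incr n (q + 1), ∑ l, (permSign (Fin.cons k M) (Fin.cons l N) : R) * w l N =
      w k M - ∑ j : Fin (q + 1), (-1) ^ (j : ℕ) * w (M j) (Fin.cons k (j.removeNth M)) := by
  rw [sum_permSign_cons_mul hw, Fin.sum_univ_succ]
  simp [removeNth_succ_cons, pow_succ, sub_eq_add_neg]

lemma sum_Incr_succ_mul_cons_removeNth {v : (Fin (q + 1) → Fin n) → R} (hv : IsAlternating v)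
    (g : Fin n → (Fin q → Fin n) → R) :
    ∑ M ∈ Incr n (q + 1), v M * ∑ j : Fin (q + 1), (-1) ^ (j : ℕ) * g (M j) (j.removeNth M) =
      ∑ J ∈ Incr n q, ∑ l, v (Fin.cons l J) * g l J := by
  rw [← sum_Incr_succ_sum_removeNth (fun l J => v (Fin.cons l J) * g l J)
    fun l J hl => by rw [hv.apply_cons_eq_zero hl, zero_mul]]
  refine Finset.sum_congr rfl fun M _ => ?_
  rw [Finset.mul_sum]
  refine Finset.sum_congr rfl fun j _ => ?_
  rw [hv.apply_cons_removeNth]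
  ring

end HM

open HM in
theorem sign_rearrangement_identity_general {R : Type*} [CommRing R] {n q : ℕ}
    {v w : Fin n → (Fin (q + 1) → Fin n) → R}
    (hv : ∀ k, IsAlternating (v k)) (hw : ∀ l, IsAlternating (w l)) :
    ∑ M ∈ Incr n (q + 1), ∑ N ∈ Incr n (q + 1), ∑ k, ∑ l,
        (permSign (Fin.cons k M) (Fin.cons l N) : R) * v k M * w l N =
      ∑ M ∈ Incr n (q + 1), ∑ k, v k M * w k M -
        ∑ J ∈ Incr n q, ∑ k, ∑ l, v k (Fin.cons l J) * w l (Fin.cons k J) := by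
  calc ∑ M ∈ Incr n (q + 1), ∑ N ∈ Incr n (q + 1), ∑ k, ∑ l,
        (permSign (Fin.cons k M) (Fin.cons l N) : R) * v k M * w l N
    _ = ∑ M ∈ Incr n (q + 1), ∑ k, v k M * ∑ N ∈ Incr n (q + 1), ∑ l,
          (permSign (Fin.cons k M) (Fin.cons l N) : R) * w l N := by
      refine Finset.sum_congr rfl fun M _ => ?_
      rw [Finset.sum_comm]
      simp only [Finset.mul_sum, mul_assoc, mul_left_comm (v _ M)]
    _ = ∑ M ∈ Incr n (q + 1), ∑ k, v k M * w k M - ∑ k, ∑ M ∈ Incr n (q + 1),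
          v k M * ∑ j : Fin (q + 1), (-1) ^ (j : ℕ) * w (M j) (Fin.cons k (j.removeNth M)) := by
      simp only [sum_permSign_cons_cons_mul hw, mul_sub, Finset.sum_sub_distrib]
      rw [Finset.sum_comm (s := Finset.univ)]
    _ = _ := by
      simp only [fun k => sum_Incr_succ_mul_cons_removeNth (hv k) fun l J => w l (Fin.cons k J)]
      rw [Finset.sum_comm (s := Finset.univ)]

/-- the algebraic rearrangement identity
`Σ' Σ' Σ σ^{kM}_{lN} v_{k,M} conj(v_{l,N}) = Σ' Σ |v_{k,M}|² − Σ' Σ v_{k,lJ} conj(v_{l,kJ})`. -/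
theorem sign_rearrangement_identity (n q : ℕ) (hn : 1 ≤ n) (hq1 : 1 ≤ q) (hqn : q ≤ n)
    (v : Fin n → (Fin q → Fin n) → ℂ)
    (hv : ∀ k, HM.IsCoeff (v k)) :
    ∑ M ∈ HM.Incr n q, ∑ N ∈ HM.Incr n q, ∑ k : Fin n, ∑ l : Fin n,
        ((HM.permSign (HM.cons' (q + 1) k M) (HM.cons' (q + 1) l N) : ℤ) : ℂ)
          * v k M * star (v l N)
      = ((∑ M ∈ HM.Incr n q, ∑ k : Fin n, ‖v k M‖ ^ 2 : ℝ) : ℂ)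
        - ∑ J ∈ HM.Incr n (q - 1), ∑ k : Fin n, ∑ l : Fin n,
            v k (HM.cons' q l J) * star (v l (HM.cons' q k J)) := by
  obtain ⟨p, rfl⟩ := Nat.exists_eq_add_of_le' hq1
  simpa [HM.cons'_succ, Complex.mul_conj'] using
    sign_rearrangement_identity_general (fun k => (hv k).isAlternating)
      fun l => (hv l).isAlternating.star
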